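/- Let B₊ denote the open upper half unit ball in ℝ³, let m ∈ ℕ, and let β = (β₁,β₂,β₃) ∈ ℕ³ be a multi-index with β₁+β₂+β₃ ≤ m. Let f : ℝ³ → ℝ be of class C^{m+1} on an open neighborhood of the closure of B₊, with f(x₁,x₂,0) = 0 whenever (x₁,x₂,0) lies in the closure of B₊. Then sup_{x ∈ B₊} |D^β(f/x₃)(x)| ≤ sup_{x ∈ B₊} |(D^β ∂₃ f)(x)|, where f/x₃ denotes the function x ↦ f(x)/x₃ on B₊. -/

import Mathlib

/-!
Write `Z = x₃∂₃`. Since `Z(h/x₃) = ((Z - 1)h)/x₃`, and `∂₁`, `∂₂` commute with division by `x₃`, the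
function `F = ∂₁^{β₁} ∂₂^{β₂} (Z - 1)^{β₃} f` satisfies `F/x₃ = D^β(f/x₃)` on the half ball
(`Eco_intertwine` with `A = (· / x₃)`). Since `∂₃(Z - 1) = Z∂₃`, it also satisfies
`∂₃F = D^β ∂₃f` on the neighborhood `V` (`Eco_intertwine` with `A = ∂₃`). Finally `F` is `C¹` on `V`
and vanishes on the flat part of the boundary (`Eco_vanish`): the derivatives `∂₁`, `∂₂` are
tangential to it, and `Z` carries the factor `x₃`.

The mean value theorem on the vertical segment from `(x₁, x₂, 0)` to `x` then produces a point
`y = (x₁, x₂, c)` of the half ball with `D^β(f/x₃)(x) = F(x)/x₃ = ∂₃F(y) = (D^β ∂₃f)(y)`,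
so every value of `D^β(f/x₃)` on the half ball is a value of `D^β ∂₃f` there.
-/

open scoped BigOperators ENNReal

/-- Partial derivative in the `i`-th coordinate direction, as an operator on functions. -/
noncomputable def pdOp (i : Fin 3) (f : (Fin 3 → ℝ) → ℝ) : (Fin 3 → ℝ) → ℝ :=
  fun x => fderiv ℝ f x (Pi.single i 1)

/-- The conormal vector field `x₃ ∂₃`, as an operator on functions. -/
noncomputable def zOp (f : (Fin 3 → ℝ) → ℝ) : (Fin 3 → ℝ) → ℝ :=
  fun x => x 2 * fderiv ℝ f x (Pi.single 2 1)

/-- The conormal differential operator `D^β = ∂₁^{β₁} ∂₂^{β₂} (x₃∂₃)^{β₃}`. -/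
noncomputable def Dco (β : Fin 3 → ℕ) (f : (Fin 3 → ℝ) → ℝ) : (Fin 3 → ℝ) → ℝ :=
  (pdOp 0)^[β 0] ((pdOp 1)^[β 1] (zOp^[β 2] f))

/-- The open upper half unit ball in ℝ³. -/
def Bplus : Set (Fin 3 → ℝ) :=
  {x | x 0 ^ 2 + x 1 ^ 2 + x 2 ^ 2 < 1 ∧ 0 < x 2}

open Set Filter Topology

/-- The operator `x₃∂₃ - 1`, conjugate to `x₃∂₃` through division by `x₃`. -/
noncomputable def wOp (f : (Fin 3 → ℝ) → ℝ) : (Fin 3 → ℝ) → ℝ :=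
  fun x => zOp f x - f x

/-- The operator `∂₁^{β₁} ∂₂^{β₂} (x₃∂₃ - 1)^{β₃}`. -/
noncomputable def Eco (β : Fin 3 → ℕ) (f : (Fin 3 → ℝ) → ℝ) : (Fin 3 → ℝ) → ℝ :=
  (pdOp 0)^[β 0] ((pdOp 1)^[β 1] (wOp^[β 2] f))

/-- `P` loses at most one derivative on `U`. -/
def LosesOne (U : Set (Fin 3 → ℝ)) (P : ((Fin 3 → ℝ) → ℝ) → ((Fin 3 → ℝ) → ℝ)) : Prop :=
  ∀ (n : ℕ) (h : (Fin 3 → ℝ) → ℝ), ContDiffOn ℝ ((n + 1 : ℕ) : WithTop ℕ∞) h U →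
    ContDiffOn ℝ (n : WithTop ℕ∞) (P h) U

/-- On `U`, the values of `Q h` depend only on the values of `h` on `U`. -/
def IsLocalOn (U : Set (Fin 3 → ℝ)) (Q : ((Fin 3 → ℝ) → ℝ) → ((Fin 3 → ℝ) → ℝ)) : Prop :=
  ∀ g g' : (Fin 3 → ℝ) → ℝ, EqOn g g' U → EqOn (Q g) (Q g') U

/-- `A ∘ P = Q ∘ A` on `U`, tested on functions of class `C²`. -/
def Intertwines (U : Set (Fin 3 → ℝ)) (A P Q : ((Fin 3 → ℝ) → ℝ) → ((Fin 3 → ℝ) → ℝ)) : Prop :=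
  ∀ h : (Fin 3 → ℝ) → ℝ, ContDiffOn ℝ 2 h U → EqOn (A (P h)) (Q (A h)) U

lemma coord_contDiffOn (U : Set (Fin 3 → ℝ)) (n : WithTop ℕ∞) (i : Fin 3) :
    ContDiffOn ℝ n (fun x : Fin 3 → ℝ => x i) U :=
  (contDiff_apply ℝ ℝ i).contDiffOn

lemma pdOp_losesOne {U : Set (Fin 3 → ℝ)} (hU : IsOpen U) (i : Fin 3) : LosesOne U (pdOp i) := by
  intro n h hh
  have h1 : ContDiffOn ℝ (n : WithTop ℕ∞) (fderiv ℝ h) U :=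
    hh.fderiv_of_isOpen hU (by push_cast; exact le_rfl)
  exact h1.clm_apply contDiffOn_const

lemma zOp_losesOne {U : Set (Fin 3 → ℝ)} (hU : IsOpen U) : LosesOne U zOp := by
  intro n h hh
  exact (coord_contDiffOn U n 2).mul (pdOp_losesOne hU 2 n h hh)

lemma wOp_losesOne {U : Set (Fin 3 → ℝ)} (hU : IsOpen U) : LosesOne U wOp := by
  intro n h hh
  exact (zOp_losesOne hU n h hh).sub (hh.of_le (by exact_mod_cast Nat.le_succ n))

lemma LosesOne.iterate {U : Set (Fin 3 → ℝ)} {P : ((Fin 3 → ℝ) → ℝ) → ((Fin 3 → ℝ) → ℝ)}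
    (hP : LosesOne U P) (k n : ℕ) (h : (Fin 3 → ℝ) → ℝ)
    (hh : ContDiffOn ℝ ((n + k : ℕ) : WithTop ℕ∞) h U) :
    ContDiffOn ℝ (n : WithTop ℕ∞) (P^[k] h) U := by
  induction k generalizing h with
  | zero => exact hh
  | succ k ih => exact ih (P h) (hP (n + k) h hh)

lemma pdOp_isLocalOn {U : Set (Fin 3 → ℝ)} (hU : IsOpen U) (i : Fin 3) : IsLocalOn U (pdOp i) := by
  intro g g' hg x hx
  have : g =ᶠ[𝓝 x] g' := hg.eventuallyEq_of_mem (hU.mem_nhds hx)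
  simp only [pdOp, this.fderiv_eq]

lemma zOp_isLocalOn {U : Set (Fin 3 → ℝ)} (hU : IsOpen U) : IsLocalOn U zOp := by
  intro g g' hg x hx
  have := pdOp_isLocalOn hU 2 g g' hg hx
  simp only [pdOp] at this
  simp only [zOp, this]

lemma IsLocalOn.iterate {U : Set (Fin 3 → ℝ)} {Q : ((Fin 3 → ℝ) → ℝ) → ((Fin 3 → ℝ) → ℝ)}
    (hQ : IsLocalOn U Q) (k : ℕ) : IsLocalOn U (Q^[k]) := by
  induction k with
  | zero => exact fun g g' hg => hg
  | succ k ih => exact fun g g' hg => ih _ _ (hQ _ _ hg)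

lemma Intertwines.iterate {U : Set (Fin 3 → ℝ)}
    {A P Q : ((Fin 3 → ℝ) → ℝ) → ((Fin 3 → ℝ) → ℝ)} (hA : Intertwines U A P Q)
    (hP : LosesOne U P) (hQ : IsLocalOn U Q) (k : ℕ) (h : (Fin 3 → ℝ) → ℝ)
    (hh : ContDiffOn ℝ ((k + 1 : ℕ) : WithTop ℕ∞) h U) :
    EqOn (A (P^[k] h)) (Q^[k] (A h)) U := by
  induction k generalizing h with
  | zero => exact fun x _ => rfl
  | succ k ih =>
    have h2 : ContDiffOn ℝ 2 h U := hh.of_le (by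
      have : (2 : ℕ) ≤ k + 1 + 1 := by lia
      exact_mod_cast this)
    exact (ih (P h) (hP (k + 1) h hh)).trans (hQ.iterate k _ _ (hA h h2))

/-- An operator commuting with `∂₁`, `∂₂` and intertwining `x₃∂₃ - 1` with `x₃∂₃` carries
`∂₁^{β₁} ∂₂^{β₂} (x₃∂₃ - 1)^{β₃}` to `D^β`. -/
lemma Eco_intertwine {U : Set (Fin 3 → ℝ)} (hU : IsOpen U)
    {A : ((Fin 3 → ℝ) → ℝ) → ((Fin 3 → ℝ) → ℝ)}
    (h0 : Intertwines U A (pdOp 0) (pdOp 0)) (h1 : Intertwines U A (pdOp 1) (pdOp 1))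
    (h2 : Intertwines U A wOp zOp) (β : Fin 3 → ℕ) (f : (Fin 3 → ℝ) → ℝ)
    (hf : ContDiffOn ℝ ((β 0 + β 1 + β 2 + 1 : ℕ) : WithTop ℕ∞) f U) :
    EqOn (A (Eco β f)) (Dco β (A f)) U := by
  have c2 : ContDiffOn ℝ ((β 0 + 1 + β 1 : ℕ) : WithTop ℕ∞) (wOp^[β 2] f) U :=
    (wOp_losesOne hU).iterate _ _ _ (hf.of_le (by
      have : β 0 + 1 + β 1 + β 2 ≤ β 0 + β 1 + β 2 + 1 := by lia
      exact_mod_cast this))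
  have c1 := (pdOp_losesOne hU 1).iterate _ _ _ c2
  have e0 := h0.iterate (pdOp_losesOne hU 0) (pdOp_isLocalOn hU 0) (β 0) _ c1
  have e1 := h1.iterate (pdOp_losesOne hU 1) (pdOp_isLocalOn hU 1) (β 1) _
    (c2.of_le (by
      have : β 1 + 1 ≤ β 0 + 1 + β 1 := by lia
      exact_mod_cast this))
  have e2 := h2.iterate (wOp_losesOne hU) (zOp_isLocalOn hU) (β 2) f
    (hf.of_le (by
      have : β 2 + 1 ≤ β 0 + β 1 + β 2 + 1 := by lia
      exact_mod_cast this))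
  exact e0.trans ((pdOp_isLocalOn hU 0).iterate _ _ _
    (e1.trans ((pdOp_isLocalOn hU 1).iterate _ _ _ e2)))

lemma Eco_contDiffOn {U : Set (Fin 3 → ℝ)} (hU : IsOpen U) (β : Fin 3 → ℕ)
    (f : (Fin 3 → ℝ) → ℝ)
    (hf : ContDiffOn ℝ ((β 0 + β 1 + β 2 + 1 : ℕ) : WithTop ℕ∞) f U) :
    ContDiffOn ℝ ((1 : ℕ) : WithTop ℕ∞) (Eco β f) U := by
  refine (pdOp_losesOne hU 0).iterate _ _ _ ((pdOp_losesOne hU 1).iterate _ _ _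
    ((wOp_losesOne hU).iterate _ _ _ (hf.of_le ?_)))
  have : 1 + β 0 + β 1 + β 2 ≤ β 0 + β 1 + β 2 + 1 := by lia
  exact_mod_cast this

/-- Symmetry of second derivatives. -/
lemma pdOp_comm {U : Set (Fin 3 → ℝ)} (hU : IsOpen U) (i j : Fin 3) :
    Intertwines U (pdOp i) (pdOp j) (pdOp j) := by
  intro h hh x hx
  have hd : DifferentiableAt ℝ (fderiv ℝ h) x :=
    ((hh.fderiv_of_isOpen (m := 1) hU (by norm_num)).differentiableOn (by norm_num)).differentiableAt
      (hU.mem_nhds hx)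
  have key : ∀ k l : Fin 3, pdOp k (pdOp l h) x
      = fderiv ℝ (fderiv ℝ h) x (Pi.single k 1) (Pi.single l 1) := by
    intro k l
    have := (hd.hasFDerivAt.clm_apply (hasFDerivAt_const (Pi.single l (1 : ℝ) : Fin 3 → ℝ) x)).fderiv
    unfold pdOp
    rw [this]
    simp
  rw [key, key]
  exact ((hh.contDiffAt (hU.mem_nhds hx)).isSymmSndFDerivAt (by simp)).eq _ _

/-- `∂₃(x₃∂₃ - 1) = (x₃∂₃)∂₃`. -/
lemma pdOp_two_wOp {U : Set (Fin 3 → ℝ)} (hU : IsOpen U) :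
    Intertwines U (pdOp 2) wOp zOp := by
  intro h hh x hx
  have hd : DifferentiableAt ℝ h x :=
    (hh.differentiableOn (by norm_num)).differentiableAt (hU.mem_nhds hx)
  have hp : DifferentiableAt ℝ (pdOp 2 h) x :=
    ((pdOp_losesOne hU 2 1 h (by exact_mod_cast hh)).differentiableOn
      (by norm_num)).differentiableAt (hU.mem_nhds hx)
  have hc : HasFDerivAt (fun y : Fin 3 → ℝ => y 2)
      (ContinuousLinearMap.proj (R := ℝ) (φ := fun _ : Fin 3 => ℝ) 2) x := hasFDerivAt_apply 2 x
  have := ((hc.mul hp.hasFDerivAt).sub hd.hasFDerivAt).fderiv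
  change fderiv ℝ (fun y => y 2 * pdOp 2 h y - h y) x (Pi.single 2 1)
    = x 2 * fderiv ℝ (pdOp 2 h) x (Pi.single 2 1)
  erw [this]
  simp [pdOp]

lemma Bplus_isOpen : IsOpen Bplus := by
  have h1 : IsOpen {x : Fin 3 → ℝ | x 0 ^ 2 + x 1 ^ 2 + x 2 ^ 2 < 1} :=
    isOpen_lt (by fun_prop) continuous_const
  have h2 : IsOpen {x : Fin 3 → ℝ | 0 < x 2} := isOpen_lt continuous_const (by fun_prop)
  exact h1.inter h2

lemma fderiv_div_coord {h : (Fin 3 → ℝ) → ℝ} {x : Fin 3 → ℝ} (hd : DifferentiableAt ℝ h x)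
    (hx : x 2 ≠ 0) (v : Fin 3 → ℝ) :
    fderiv ℝ (fun y => h y / y 2) x v = (x 2 * fderiv ℝ h x v - h x * v 2) / x 2 ^ 2 := by
  have hc : HasFDerivAt (fun y : Fin 3 → ℝ => y 2)
      (ContinuousLinearMap.proj (R := ℝ) (φ := fun _ : Fin 3 => ℝ) 2) x := hasFDerivAt_apply 2 x
  have hi : HasFDerivAt (fun y : Fin 3 → ℝ => (y 2)⁻¹) _ x :=
    (hasDerivAt_inv hx).comp_hasFDerivAt x hc
  have hm : HasFDerivAt (fun y => h y / y 2) _ x := hd.hasFDerivAt.mul hi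
  rw [hm.fderiv]
  simp
  field_simp
  ring

lemma div_pdOp (i : Fin 3) (hi : i ≠ 2) :
    Intertwines Bplus (fun h y => h y / y 2) (pdOp i) (pdOp i) := by
  intro h hh x hx
  have hd : DifferentiableAt ℝ h x :=
    (hh.differentiableOn (by norm_num)).differentiableAt (Bplus_isOpen.mem_nhds hx)
  have h2 : x 2 ≠ 0 := hx.2.ne'
  simp only [pdOp]
  rw [fderiv_div_coord hd h2, Pi.single_eq_of_ne hi.symm]
  field_simp
  ring

/-- `((x₃∂₃ - 1)h)/x₃ = x₃∂₃(h/x₃)`. -/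
lemma div_wOp : Intertwines Bplus (fun h y => h y / y 2) wOp zOp := by
  intro h hh x hx
  have hd : DifferentiableAt ℝ h x :=
    (hh.differentiableOn (by norm_num)).differentiableAt (Bplus_isOpen.mem_nhds hx)
  have h2 : x 2 ≠ 0 := hx.2.ne'
  simp only [wOp, zOp]
  rw [fderiv_div_coord hd h2, Pi.single_eq_same]
  field_simp

/-- The open flat part of the boundary of the half ball. -/
def flatDisc : Set (Fin 3 → ℝ) := {x | x 0 ^ 2 + x 1 ^ 2 < 1 ∧ x 2 = 0}

/-- A tangential derivative of a function vanishing on the flat disc vanishes there; no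
differentiability is needed because `fderiv` is `0` where the derivative does not exist. -/
lemma pdOp_vanish (i : Fin 3) (hi : i ≠ 2) (h : (Fin 3 → ℝ) → ℝ) (hh : ∀ x ∈ flatDisc, h x = 0) :
    ∀ x ∈ flatDisc, pdOp i h x = 0 := by
  intro x hx
  unfold pdOp
  by_cases hd : DifferentiableAt ℝ h x
  · have hl : HasDerivAt (fun t : ℝ => h (x + t • Pi.single i (1 : ℝ)))
        (fderiv ℝ h x (Pi.single i 1)) 0 := hd.hasFDerivAt.hasLineDerivAt _
    have hO : IsOpen {y : Fin 3 → ℝ | y 0 ^ 2 + y 1 ^ 2 < 1} :=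
      isOpen_lt (by fun_prop) continuous_const
    have hcont : Continuous (fun t : ℝ => x + t • (Pi.single i (1 : ℝ) : Fin 3 → ℝ)) := by fun_prop
    have hev : (fun t : ℝ => h (x + t • Pi.single i (1 : ℝ))) =ᶠ[𝓝 0] fun _ => (0 : ℝ) := by
      filter_upwards [(hO.preimage hcont).mem_nhds (x := (0 : ℝ)) (by simpa using hx.1)] with t ht
      refine hh _ ⟨ht, ?_⟩
      simp [hx.2, Pi.single_eq_of_ne hi.symm]
    exact hl.unique ((hasDerivAt_const (0 : ℝ) (0 : ℝ)).congr_of_eventuallyEq hev)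
  · rw [fderiv_zero_of_not_differentiableAt hd]; rfl

lemma wOp_vanish (h : (Fin 3 → ℝ) → ℝ) (hh : ∀ x ∈ flatDisc, h x = 0) :
    ∀ x ∈ flatDisc, wOp h x = 0 := by
  intro x hx
  simp [wOp, zOp, hx.2, hh x hx]

lemma iterate_vanish {P : ((Fin 3 → ℝ) → ℝ) → ((Fin 3 → ℝ) → ℝ)}
    (hP : ∀ h : (Fin 3 → ℝ) → ℝ, (∀ x ∈ flatDisc, h x = 0) → ∀ x ∈ flatDisc, P h x = 0) (k : ℕ)
    (h : (Fin 3 → ℝ) → ℝ) (hh : ∀ x ∈ flatDisc, h x = 0) : ∀ x ∈ flatDisc, P^[k] h x = 0 := by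
  induction k generalizing h with
  | zero => exact hh
  | succ k ih => exact ih (P h) (hP h hh)

lemma Eco_vanish (β : Fin 3 → ℕ) (f : (Fin 3 → ℝ) → ℝ) (hf : ∀ x ∈ flatDisc, f x = 0) :
    ∀ x ∈ flatDisc, Eco β f x = 0 :=
  iterate_vanish (pdOp_vanish 0 (by decide)) _ _ (iterate_vanish (pdOp_vanish 1 (by decide)) _ _
    (iterate_vanish wOp_vanish _ _ hf))

lemma flatDisc_subset_closure : flatDisc ⊆ closure Bplus := by
  intro x hx
  -- the points `x + t e₃` with small `t > 0` lie in the half ball and tend to `x`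
  have hcont : Continuous (fun t : ℝ => x + t • (Pi.single 2 (1 : ℝ) : Fin 3 → ℝ)) := by fun_prop
  have hO : IsOpen {y : Fin 3 → ℝ | y 0 ^ 2 + y 1 ^ 2 + y 2 ^ 2 < 1} :=
    isOpen_lt (by fun_prop) continuous_const
  have hlim : Tendsto (fun t : ℝ => x + t • (Pi.single 2 (1 : ℝ) : Fin 3 → ℝ)) (𝓝[>] 0) (𝓝 x) := by
    have := hcont.tendsto 0
    simp only [zero_smul, add_zero] at this
    exact this.mono_left nhdsWithin_le_nhds
  refine mem_closure_of_tendsto hlim ?_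
  filter_upwards [self_mem_nhdsWithin,
    hlim (hO.mem_nhds (by simpa [hx.2] using hx.1))] with t ht ht'
  refine ⟨ht', ?_⟩
  simpa [hx.2] using ht

/-- Every value of `D^β(f/x₃)` on the half ball is a value of `D^β ∂₃f` on the half ball. -/
lemma exists_Dco_eq (β : Fin 3 → ℕ) (f : (Fin 3 → ℝ) → ℝ)
    (V : Set (Fin 3 → ℝ)) (hV : IsOpen V) (hBV : closure Bplus ⊆ V)
    (hf : ContDiffOn ℝ ((β 0 + β 1 + β 2 + 1 : ℕ) : WithTop ℕ∞) f V)
    (hbd : ∀ x ∈ flatDisc, f x = 0) (x : Fin 3 → ℝ) (hx : x ∈ Bplus) :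
    ∃ y ∈ Bplus, Dco β (fun y => f y / y 2) x = Dco β (pdOp 2 f) y := by
  have hBV' : Bplus ⊆ V := subset_closure.trans hBV
  have e1 : Eco β f x / x 2 = Dco β (fun y => f y / y 2) x :=
    Eco_intertwine Bplus_isOpen (div_pdOp 0 (by decide)) (div_pdOp 1 (by decide)) div_wOp β f
      (hf.mono hBV') hx
  have e2 : EqOn (pdOp 2 (Eco β f)) (Dco β (pdOp 2 f)) V :=
    Eco_intertwine hV (pdOp_comm hV 2 0) (pdOp_comm hV 2 1) (pdOp_two_wOp hV) β f hf
  -- the vertical line through `x`, which is at `x` for `t = x₃`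
  set γ : ℝ → Fin 3 → ℝ := fun t => Function.update x 2 t with hγ
  have γ0 : ∀ t, γ t 0 = x 0 := fun t => by simp [hγ]
  have γ1 : ∀ t, γ t 1 = x 1 := fun t => by simp [hγ]
  have γ2 : ∀ t, γ t 2 = t := fun t => by simp [hγ]
  have γB : ∀ t ∈ Ioc 0 (x 2), γ t ∈ Bplus := by
    intro t ht
    refine ⟨?_, by rw [γ2]; exact ht.1⟩
    rw [γ0, γ1, γ2]
    nlinarith [hx.1, ht.1, ht.2]
  have γF : γ 0 ∈ flatDisc := ⟨by rw [γ0, γ1]; nlinarith [hx.1, sq_nonneg (x 2)], γ2 0⟩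
  have γV : ∀ t ∈ Icc 0 (x 2), γ t ∈ V := by
    intro t ht
    rcases ht.1.eq_or_lt with h | h
    · rw [← h]; exact hBV (flatDisc_subset_closure γF)
    · exact hBV' (γB t ⟨h, ht.2⟩)
  have hder : ∀ t ∈ Icc 0 (x 2),
      HasDerivAt (fun t => Eco β f (γ t)) (pdOp 2 (Eco β f) (γ t)) t := by
    intro t ht
    have hd : DifferentiableAt ℝ (Eco β f) (γ t) :=
      ((Eco_contDiffOn hV β f hf).differentiableOn (by norm_num)).differentiableAt
        (hV.mem_nhds (γV t ht))
    exact hd.hasFDerivAt.comp_hasDerivAt t (hasDerivAt_update x 2 t)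
  obtain ⟨c, hc, hslope⟩ := exists_hasDerivAt_eq_slope (fun t => Eco β f (γ t))
    (fun t => pdOp 2 (Eco β f) (γ t)) hx.2
    (fun t ht => (hder t ht).continuousAt.continuousWithinAt)
    (fun t ht => hder t (Ioo_subset_Icc_self ht))
  refine ⟨γ c, γB c (Ioo_subset_Ioc_self hc), ?_⟩
  have hγx : γ (x 2) = x := Function.update_eq_self 2 x
  rw [← e1, ← e2 (γV c (Ioo_subset_Icc_self hc)), hslope, hγx, Eco_vanish β f hbd _ γF]
  simp

theorem stmt4 (m : ℕ) (β : Fin 3 → ℕ) (hβ : β 0 + β 1 + β 2 ≤ m)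
    (f : (Fin 3 → ℝ) → ℝ)
    (V : Set (Fin 3 → ℝ)) (hV : IsOpen V) (hBV : closure Bplus ⊆ V)
    (hf : ContDiffOn ℝ (m + 1) f V)
    (hbd : ∀ a b : ℝ, (![a, b, 0] : Fin 3 → ℝ) ∈ closure Bplus → f ![a, b, 0] = 0) :
    (⨆ x ∈ Bplus, (‖Dco β (fun y => f y / y 2) x‖₊ : ℝ≥0∞))
      ≤ ⨆ x ∈ Bplus, (‖Dco β (pdOp 2 f) x‖₊ : ℝ≥0∞) := by
  have hf' : ContDiffOn ℝ ((β 0 + β 1 + β 2 + 1 : ℕ) : WithTop ℕ∞) f V := hf.of_le (by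
    have : β 0 + β 1 + β 2 + 1 ≤ m + 1 := by lia
    exact_mod_cast this)
  have hbd' : ∀ x ∈ flatDisc, f x = 0 := by
    intro x hx
    have e : x = ![x 0, x 1, 0] := by
      ext i
      fin_cases i <;> simp [hx.2]
    have hc := flatDisc_subset_closure hx
    rw [e] at hc ⊢
    exact hbd _ _ hc
  refine iSup₂_le fun x hx => ?_
  obtain ⟨y, hy, hxy⟩ := exists_Dco_eq β f V hV hBV hf' hbd' x hx
  rw [hxy]
  exact le_iSup₂ (f := fun y (_ : y ∈ Bplus) => (‖Dco β (pdOp 2 f) y‖₊ : ℝ≥0∞)) y hy
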